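/- Let F be a finite field of characteristic two and let (F, +, *) be a commutative presemifield. Then there exist a commutative presemifield (F, +, ⋆) strongly isotopic to (F, +, *) and a pseudo-planar function f : F → F such that x ⋆ y = xy + f(x+y) + f(x) + f(y) for all x, y ∈ F. -/

import Mathlib

/-!
In characteristic two the diagonal `x ↦ x * x` of a commutative biadditive multiplication is
additive. When it and the Frobenius map are bijective, which over a finite field follows from the
absence of zero divisors, composing `*` with the additive bijection `L` that carries `x * x` to
`x ^ 2` gives a multiplication `⋆` with the same diagonal as the ring multiplication, so
`(x, y) ↦ x ⋆ y - x y` is alternating over `𝔽₂`. An alternating map over `𝔽₂` is the polarization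
of a quadratic map `f`, namely of the diagonal of its strictly upper triangular part. Finally
`x ↦ f (x + c) + f x + c x` is a translate of `x ↦ x ⋆ c`, so pseudo-planarity of `f` says that
`⋆`-multiplication by every `c ≠ 0` is bijective.
-/

section AlternatingMaps

variable {R V W : Type*} [CommRing R] [AddCommGroup V] [Module R V] [Module.Free R V]
  [AddCommGroup W] [Module R W] {B : V →ₗ[R] V →ₗ[R] W}

theorem exists_eq_sub_flip_of_isAlt (hB : B.IsAlt) :
    ∃ C : V →ₗ[R] V →ₗ[R] W, B = C - C.flip := by
  classical
  let b := Module.Free.chooseBasis R V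
  let : LinearOrder (Module.Free.ChooseBasisIndex R V) := linearOrderOfSTO WellOrderingRel
  let C : V →ₗ[R] V →ₗ[R] W :=
    b.constr ℕ fun i => b.constr ℕ fun j => if i < j then B (b i) (b j) else 0
  have hC (i j) : C (b i) (b j) = if i < j then B (b i) (b j) else 0 := by
    simp only [C, Module.Basis.constr_basis]
  refine ⟨C, b.ext fun i => b.ext fun j => ?_⟩
  simp only [LinearMap.sub_apply, LinearMap.flip_apply, hC]
  rcases lt_trichotomy i j with hij | rfl | hji
  · simp [hij, hij.not_gt]
  · simp [hB.self_eq_zero]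
  · simp [hji, hji.not_gt, hB.neg]

theorem exists_polarBilin_eq_of_isAlt [CharP R 2] (hB : B.IsAlt) :
    ∃ Q : QuadraticMap R V W, Q.polarBilin = B := by
  obtain ⟨C, rfl⟩ := exists_eq_sub_flip_of_isAlt hB
  refine ⟨LinearMap.BilinMap.toQuadraticMap C, ?_⟩
  have hneg : -C.flip = C.flip := by
    rw [← neg_one_smul R, CharTwo.neg_eq, one_smul]
  rw [LinearMap.BilinMap.polarBilin_toQuadraticMap, sub_eq_add_neg, hneg]

end AlternatingMaps

section Diagonal

variable {V W : Type*} [AddCommGroup V] [AddCommGroup W]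

/-- The diagonal `x ↦ B x x` of a symmetric biadditive map `B` as an additive map. The target has
exponent two, encoded by its `ZMod 2`-module structure, so that the cross terms cancel. -/
def diagonalHom [Module (ZMod 2) W] (B : V →+ V →+ W) (hB : ∀ x y, B x y = B y x) : V →+ W :=
  AddMonoidHom.mk' (fun x => B x x) fun x y => by
    calc B (x + y) (x + y) = B x x + B y y + (B x y + B x y) := by
          simp only [map_add, AddMonoidHom.add_apply, hB y x]; abel
      _ = B x x + B y y := by rw [ZModModule.add_self, add_zero]

variable [Finite V] {mul : V →+ V →+ V}

theorem bijective_diagonal_of_finite (hsymm : ∀ x y, mul x y = mul y x)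
    (hnzd : ∀ x y, mul x y = 0 → x = 0 ∨ y = 0) [Module (ZMod 2) V] :
    Function.Bijective fun x => mul x x :=
  Finite.injective_iff_bijective.mp <| (injective_iff_map_eq_zero (diagonalHom mul hsymm)).mpr
    fun x hx => or_self_iff.mp (hnzd x x hx)

theorem bijective_mul_right_of_finite (hnzd : ∀ x y, mul x y = 0 → x = 0 ∨ y = 0)
    {c : V} (hc : c ≠ 0) : Function.Bijective fun x => mul x c :=
  Finite.injective_iff_bijective.mp <| (injective_iff_map_eq_zero (mul.flip c)).mpr
    fun x hx => (hnzd x c hx).resolve_right hc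

end Diagonal

section CommRing

variable {F : Type*} [CommRing F]

/-- Pseudo-planar functions: the characteristic-two analogue of planar functions, with the
derivative `x ↦ f (x + c) - f x` of `f` in every nonzero direction corrected by `x ↦ c * x`. -/
def IsPseudoPlanar (f : F → F) : Prop :=
  ∀ c : F, c ≠ 0 → Function.Bijective fun x => f (x + c) + f x + c * x

variable [CharP F 2]

theorem isPseudoPlanar_iff_bijective_mul_right {f : F → F} {mul : F → F → F}
    (hmul : ∀ x y, mul x y = x * y + f (x + y) + f x + f y) :
    IsPseudoPlanar f ↔ ∀ c : F, c ≠ 0 → Function.Bijective fun x => mul x c := by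
  refine forall₂_congr fun c _ => ?_
  have htranslate : (fun x => f (x + c) + f x + c * x) = Equiv.addRight (f c) ∘ (mul · c) := by
    funext x
    simp only [Function.comp_apply, Equiv.coe_addRight, hmul]
    linear_combination -CharTwo.add_self_eq_zero (f c)
  rw [htranslate, Equiv.comp_bijective]

theorem exists_eq_mul_add_polarization_of_self_eq_sq (mul : F →+ F →+ F)
    (hsq : ∀ x, mul x x = x ^ 2) :
    ∃ f : F → F, ∀ x y, mul x y = x * y + f (x + y) + f x + f y := by
  let := ZMod.algebra F 2
  let B : F →ₗ[ZMod 2] F →ₗ[ZMod 2] F := AddMonoidHom.toZModLinearMap 2 <|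
    (AddMonoidHom.toZModLinearMapEquiv 2).toAddMonoidHom.comp (mul - AddMonoidHom.mul)
  have hB (x y) : B x y = mul x y - x * y := rfl
  obtain ⟨Q, hQ⟩ := exists_polarBilin_eq_of_isAlt (B := B) fun x => by rw [hB, hsq, sq, sub_self]
  refine ⟨Q, fun x y => ?_⟩
  have hpolar : Q (x + y) - Q x - Q y = mul x y - x * y := by
    rw [← hB, ← hQ]; rfl
  rw [CharTwo.sub_eq_add, CharTwo.sub_eq_add] at hpolar
  linear_combination -hpolar

theorem exists_addEquiv_map_self_eq_sq [PerfectRing F 2] (mul : F →+ F →+ F)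
    (hcomm : ∀ x y, mul x y = mul y x) (hdiag : Function.Bijective fun x => mul x x) :
    ∃ L : F ≃+ F, ∀ x, L (mul x x) = x ^ 2 := by
  let := ZMod.algebra F 2
  let D : F ≃+ F := AddEquiv.ofBijective (diagonalHom mul hcomm) hdiag
  exact ⟨D.symm.trans (frobeniusEquiv F 2).toAddEquiv,
    fun x => congrArg (frobeniusEquiv F 2) (D.symm_apply_apply x)⟩

theorem commutative_presemifield_strongly_isotopic_pseudoPlanar_general [PerfectRing F 2]
    (mul : F →+ F →+ F) (hcomm : ∀ x y, mul x y = mul y x)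
    (hdiag : Function.Bijective fun x => mul x x)
    (hmul : ∀ c : F, c ≠ 0 → Function.Bijective fun x => mul x c) :
    ∃ (smul : F → F → F) (f : F → F) (L M : F →+ F),
      Function.Bijective L ∧ Function.Bijective M ∧
      (∀ x y : F, L (mul x y) = smul (M x) (M y)) ∧
      (∀ x y : F, smul x y = smul y x) ∧
      (∀ x y z : F, smul (x + y) z = smul x z + smul y z) ∧
      (∀ x y z : F, smul x (y + z) = smul x y + smul x z) ∧
      (∀ x y : F, smul x y = 0 → x = 0 ∨ y = 0) ∧
      IsPseudoPlanar f ∧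
      (∀ x y : F, smul x y = x * y + f (x + y) + f x + f y) := by
  obtain ⟨L, hL⟩ := exists_addEquiv_map_self_eq_sq mul hcomm hdiag
  let star : F →+ F →+ F := (AddMonoidHom.compHom L.toAddMonoidHom).comp mul
  obtain ⟨f, hf⟩ := exists_eq_mul_add_polarization_of_self_eq_sq star hL
  have hstar (c : F) (hc : c ≠ 0) : Function.Bijective fun x => star x c :=
    L.bijective.comp (hmul c hc)
  have hnzd (x y : F) (hxy : star x y = 0) : x = 0 ∨ y = 0 :=
    or_iff_not_imp_right.mpr fun hy =>
      (injective_iff_map_eq_zero (star.flip y)).mp (hstar y hy).injective x hxy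
  exact ⟨fun x y => star x y, f, L, AddMonoidHom.id F, L.bijective, Function.bijective_id,
    fun _ _ => rfl, fun x y => congrArg L (hcomm x y), fun _ _ z => map_add (star.flip z) _ _,
    fun x => map_add (star x), hnzd, (isPseudoPlanar_iff_bijective_mul_right hf).mpr hstar, hf⟩

end CommRing

/-- **Theorem (part 2).** Let `F` be a finite field of characteristic two and `(F, +, *)`
a commutative presemifield.  Then there exist a commutative presemifield `(F, +, ⋆)`
strongly isotopic to `(F, +, *)` (i.e. `L (x * y) = M x ⋆ M y` for some bijective
`𝔽_2`-linear — equivalently additive — maps `L, M`) and a pseudo-planar function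
`f : F → F` such that `x ⋆ y = x y + f (x + y) + f x + f y` for all `x y`.  Thus, up to
isotopism, any commutative semifield of characteristic two can be described by a
pseudo-planar function. -/
theorem commutative_presemifield_strongly_isotopic_pseudoPlanar
    (F : Type*) [Field F] [Fintype F] [CharP F 2]
    (mul : F → F → F)
    (hcomm : ∀ x y : F, mul x y = mul y x)
    (hdistl : ∀ x y z : F, mul (x + y) z = mul x z + mul y z)
    (hdistr : ∀ x y z : F, mul x (y + z) = mul x y + mul x z)
    (hnzd : ∀ x y : F, mul x y = 0 → x = 0 ∨ y = 0) :
    ∃ (smul : F → F → F) (f : F → F) (L M : F →+ F),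
      Function.Bijective L ∧ Function.Bijective M ∧
      -- strong isotopy between `*` and `⋆`
      (∀ x y : F, L (mul x y) = smul (M x) (M y)) ∧
      -- `(F, +, ⋆)` is a commutative presemifield
      (∀ x y : F, smul x y = smul y x) ∧
      (∀ x y z : F, smul (x + y) z = smul x z + smul y z) ∧
      (∀ x y z : F, smul x (y + z) = smul x y + smul x z) ∧
      (∀ x y : F, smul x y = 0 → x = 0 ∨ y = 0) ∧
      -- `f` is pseudo-planar
      (∀ c : F, c ≠ 0 → Function.Bijective fun x => f (x + c) + f x + c * x) ∧
      -- `⋆` is described by `f`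
      (∀ x y : F, smul x y = x * y + f (x + y) + f x + f y) := by
  let := ZMod.algebra F 2
  let B : F →+ F →+ F := AddMonoidHom.mk' (fun x => AddMonoidHom.mk' (mul x) (hdistr x))
    fun x y => AddMonoidHom.ext (hdistl x y)
  exact commutative_presemifield_strongly_isotopic_pseudoPlanar_general B hcomm
    (bijective_diagonal_of_finite hcomm hnzd) fun _ => bijective_mul_right_of_finite hnzd
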